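/- arXiv:2109.08177 — 7 statements merged into one kernel-verified Lean document; each statement's English description precedes it below -/
import Mathlib

section
/- Let F : ℝ → ℝ be locally Lipschitz continuous and satisfy the homogeneity condition F(2^{jN/p*} s) = 2^{jN} F(s) for all s ∈ ℝ and all j ∈ ℤ. Then there exists a constant C > 0 such that for all a, b ∈ ℝ, |F(a + b) − F(a) − F(b)| ≤ C (|a|^{p*−1} |b| + |a| |b|^{p*−1}). -/
/-!
The discrete scaling `F (l ^ j * s) = (l ^ j) ^ q * F s`, with `l = 2 ^ (N / q) > 1` and `q = pstar`,
upgrades the Lipschitz bound of `F` on the compact interval `[-l, l]` to the homogeneous bound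
`|F x - F y| ≤ K * M ^ (q - 1) * |x - y|` whenever `|x|, |y| ≤ M`
(`exists_homogeneous_lipschitz`): rescale by the power of `l` comparable to `M`.

By symmetry let `|b| ≤ |a|`, and write `F (a + b) - F a - F b` as
`(F (a + b) - F a) - (F b - F 0)`. The bound with `M = 2 * |a|` for the first difference and with
`M = |a|` for the second makes both of them at most a constant times `|a| ^ (q - 1) * |b|`.
-/

open Filter

/-- A locally Lipschitz function that is homogeneous of degree `q ≥ 1` under the dilations by powers
of some `l > 1` has Lipschitz constant of order `M ^ (q - 1)` on `[-M, M]`. -/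
lemma exists_homogeneous_lipschitz {F : ℝ → ℝ} (hF : LocallyLipschitz F) {l q : ℝ}
    (hl : 1 < l) (hq : 1 ≤ q) (hhom : ∀ (s : ℝ) (j : ℤ), F (l ^ j * s) = (l ^ j) ^ q * F s) :
    ∃ K > 0, ∀ x y M : ℝ, 0 < M → |x| ≤ M → |y| ≤ M →
      |F x - F y| ≤ K * M ^ (q - 1) * |x - y| := by
  obtain ⟨K, hK⟩ := (hF.locallyLipschitzOn (s := Set.Icc (-l) l)).exists_lipschitzOnWith_of_compact
    isCompact_Icc
  refine ⟨K + 1, by positivity, fun x y M hM hx hy => ?_⟩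
  obtain ⟨j, hj1, hj2⟩ := exists_mem_Ico_zpow hM hl
  have hl0 : 0 < l := by linarith
  have ht : 0 < l ^ j := zpow_pos hl0 j
  rw [zpow_add_one₀ hl0.ne'] at hj2
  have hmem : ∀ z : ℝ, |z| ≤ M → z / l ^ j ∈ Set.Icc (-l) l := fun z hz => by
    rw [Set.mem_Icc, ← abs_le, abs_div, abs_of_pos ht, div_le_iff₀ ht]
    linarith
  have hscale : ∀ z : ℝ, F z = (l ^ j) ^ q * F (z / l ^ j) := fun z => by
    rw [← hhom, mul_div_cancel₀ _ ht.ne']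
  have hlip := hK.dist_le_mul _ (hmem x hx) _ (hmem y hy)
  rw [Real.dist_eq, Real.dist_eq, ← sub_div, abs_div, abs_of_pos ht] at hlip
  have hpow : (l ^ j) ^ q = (l ^ j) ^ (q - 1) * l ^ j := by
    rw [Real.rpow_sub_one ht.ne', div_mul_cancel₀ _ ht.ne']
  calc |F x - F y| = (l ^ j) ^ q * |F (x / l ^ j) - F (y / l ^ j)| := by
        rw [hscale x, hscale y, ← mul_sub, abs_mul, abs_of_pos (Real.rpow_pos_of_pos ht q)]
    _ ≤ (l ^ j) ^ q * (K * (|x - y| / l ^ j)) := by gcongr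
    _ = K * (l ^ j) ^ (q - 1) * |x - y| := by rw [hpow]; field_simp
    _ ≤ (K + 1) * M ^ (q - 1) * |x - y| := by
        gcongr
        linarith

theorem stmt_0 (m N : ℕ) (hm : 0 < m) (hmN : m < N)
    (p pstar : ℝ) (hp : 1 < p) (hpN : p < (N : ℝ) / m)
    (hps : pstar = p * N / (N - m * p))
    (F : ℝ → ℝ) (hF : LocallyLipschitz F)
    (hhom : ∀ (s : ℝ) (j : ℤ),
      F ((2 : ℝ) ^ (((j : ℝ) * N) / pstar) * s) = (2 : ℝ) ^ ((j : ℝ) * N) * F s) :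
    ∃ C > 0, ∀ a b : ℝ,
      |F (a + b) - F a - F b| ≤
        C * (|a| ^ (pstar - 1) * |b| + |a| * |b| ^ (pstar - 1)) := by
  have hm' : (0 : ℝ) < m := by exact_mod_cast hm
  have hN' : (0 : ℝ) < N := by exact_mod_cast hm.trans hmN
  have hden : 0 < (N : ℝ) - m * p := by
    rw [lt_div_iff₀ hm'] at hpN
    linarith
  have hq : 1 < pstar := by
    rw [hps, lt_div_iff₀ hden]
    nlinarith [mul_pos hm' (zero_lt_one.trans hp), mul_pos hN' (sub_pos.2 hp)]
  have hq0 : 0 < pstar := by linarith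
  have hl : 1 < (2 : ℝ) ^ ((N : ℝ) / pstar) := Real.one_lt_rpow (by norm_num) (by positivity)
  obtain ⟨K, hK0, hK⟩ := exists_homogeneous_lipschitz hF hl hq.le (fun s j => by
    have h1 : ((2 : ℝ) ^ ((N : ℝ) / pstar)) ^ j = (2 : ℝ) ^ (((j : ℝ) * N) / pstar) := by
      rw [← Real.rpow_intCast, ← Real.rpow_mul (by norm_num)]
      congr 1
      ring
    rw [h1, hhom, ← Real.rpow_mul (by norm_num), div_mul_cancel₀ _ hq0.ne'])
  have hF0 : F 0 = 0 := by
    have h := hhom 0 1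
    have h2 : 1 < (2 : ℝ) ^ (((1 : ℤ) : ℝ) * N) :=
      Real.one_lt_rpow (by norm_num) (by push_cast; linarith)
    rw [mul_zero] at h
    have h3 : ((2 : ℝ) ^ (((1 : ℤ) : ℝ) * N) - 1) * F 0 = 0 := by linarith
    exact (mul_eq_zero.1 h3).resolve_left (by linarith)
  have key : ∀ a b : ℝ, |b| ≤ |a| →
      |F (a + b) - F a - F b| ≤ K * (2 ^ (pstar - 1) + 1) * (|a| ^ (pstar - 1) * |b|) := by
    intro a b hab
    rcases (abs_nonneg a).eq_or_lt with ha | ha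
    · have ha0 : a = 0 := abs_eq_zero.1 ha.symm
      have hb0 : b = 0 := abs_eq_zero.1 (le_antisymm (ha ▸ hab) (abs_nonneg b))
      simp [ha0, hb0, hF0]
    · have h1 := hK (a + b) a (2 * |a|) (by linarith) (by linarith [abs_add_le a b]) (by linarith)
      have h2 := hK b 0 |a| ha hab (by simp)
      rw [add_sub_cancel_left, Real.mul_rpow (by norm_num) ha.le] at h1
      rw [hF0, sub_zero, sub_zero] at h2
      linarith [abs_sub (F (a + b) - F a) (F b)]
  refine ⟨K * (2 ^ (pstar - 1) + 1), by positivity, fun a b => ?_⟩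
  rcases le_total |b| |a| with hab | hab
  · refine (key a b hab).trans ?_
    gcongr
    exact le_add_of_nonneg_right (by positivity)
  · have h := key b a hab
    rw [add_comm b a, sub_right_comm, mul_comm (|b| ^ (pstar - 1))] at h
    refine h.trans ?_
    gcongr
    exact le_add_of_nonneg_left (by positivity)
end

section
/- Let F : ℝ → ℝ be locally Lipschitz continuous and satisfy the homogeneity condition F(2^{jN/p*} s) = 2^{jN} F(s) for all s ∈ ℝ and all j ∈ ℤ. Then for every L ∈ ℕ there exists a constant C_L > 0 such that for all s_1, …, s_L ∈ ℝ, |F(∑_{l=1}^L s_l) − ∑_{l=1}^L F(s_l)| ≤ C_L ∑_{1 ≤ l ≠ k ≤ L} |s_l| |s_k|^{p*−1}. -/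
/-!
Write `q = pstar > 1` and `t = 2 ^ (N / q) > 1`, so that `F (t ^ j * s) = (t ^ j) ^ q * F s` for all
integers `j`. By compactness `F` is `K`-Lipschitz on `[-t, t]`; rescaling by the power of `t` that
brings `M` into `[1, t)` gives `|F a - F b| ≤ K * M ^ (q - 1) * |a - b|` whenever `|a|, |b| ≤ M`
(`exists_scaled_lipschitz`).

For `L ≥ 1`, choose `k` with `|s k|` maximal. The scaled Lipschitz bound with `M = L * |s k|`
controls `F (∑ l, s l) - F (s k)`, and with `M = |s k|` and `F 0 = 0` it controls each other
`F (s l)`. Both are bounded by multiples of `∑ l ≠ k, |s l| * |s k| ^ (q - 1)`, which is only a part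
of the double sum on the right-hand side.
-/

open Filter

/-- A locally Lipschitz function that is positively homogeneous of degree `q` under the discrete
dilations by powers of `t > 1` has Lipschitz constant of order `M ^ (q - 1)` on `[-M, M]`. -/
lemma exists_scaled_lipschitz (F : ℝ → ℝ) (hF : LocallyLipschitz F) (q t : ℝ) (hq : 1 < q)
    (ht : 1 < t) (hh : ∀ (s : ℝ) (j : ℤ), F (t ^ j * s) = (t ^ j) ^ q * F s) :
    ∃ K : ℝ, 0 ≤ K ∧ ∀ M a b : ℝ, |a| ≤ M → |b| ≤ M →
      |F a - F b| ≤ K * M ^ (q - 1) * |a - b| := by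
  obtain ⟨K, hK⟩ := (hF.locallyLipschitzOn (s := Set.Icc (-t) t)).exists_lipschitzOnWith_of_compact
    isCompact_Icc
  refine ⟨K, K.2, fun M a b ha hb => ?_⟩
  rcases (abs_nonneg a |>.trans ha).eq_or_lt with h0 | hM
  · subst h0
    have ha' := abs_nonpos_iff.1 ha
    have hb' := abs_nonpos_iff.1 hb
    simp [ha', hb']
  obtain ⟨j, hj1, hj2⟩ := exists_mem_Ico_zpow hM ht
  have hr : 0 < t ^ j := zpow_pos (by linarith) j
  rw [zpow_add_one₀ (by linarith)] at hj2
  set r := t ^ j with hrdef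
  have hmem : ∀ x : ℝ, |x| ≤ M → x / r ∈ Set.Icc (-t) t := fun x hx => by
    rw [Set.mem_Icc, ← abs_le, abs_div, abs_of_pos hr, div_le_iff₀ hr]
    linarith
  have hsc : ∀ x : ℝ, F x = r ^ q * F (x / r) := fun x => by
    rw [hrdef, ← hh, mul_div_cancel₀ _ hr.ne']
  have hlip := hK.dist_le_mul _ (hmem a ha) _ (hmem b hb)
  rw [Real.dist_eq, Real.dist_eq, ← sub_div, abs_div, abs_of_pos hr] at hlip
  have hrq : 0 < r ^ q := Real.rpow_pos_of_pos hr q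
  calc |F a - F b| = r ^ q * |F (a / r) - F (b / r)| := by
        rw [hsc a, hsc b, ← mul_sub, abs_mul, abs_of_pos hrq]
    _ ≤ r ^ q * (K * (|a - b| / r)) := by gcongr
    _ = K * r ^ (q - 1) * |a - b| := by
        rw [Real.rpow_sub_one hr.ne']; ring
    _ ≤ K * M ^ (q - 1) * |a - b| := by
        have := Real.rpow_le_rpow hr.le hj1 (by linarith : 0 ≤ q - 1)
        gcongr

theorem stmt_1 (m N : ℕ) (hm : 0 < m) (hmN : m < N)
    (p pstar : ℝ) (hp : 1 < p) (hpN : p < (N : ℝ) / m)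
    (hps : pstar = p * N / (N - m * p))
    (F : ℝ → ℝ) (hF : LocallyLipschitz F)
    (hhom : ∀ (s : ℝ) (j : ℤ),
      F ((2 : ℝ) ^ (((j : ℝ) * N) / pstar) * s) = (2 : ℝ) ^ ((j : ℝ) * N) * F s) :
    ∀ L : ℕ, ∃ C > 0, ∀ s : Fin L → ℝ,
      |F (∑ l, s l) - ∑ l, F (s l)| ≤
        C * ∑ l, ∑ k, if l ≠ k then |s l| * |s k| ^ (pstar - 1) else 0 := by
  have hm' : (0 : ℝ) < m := by exact_mod_cast hm
  have hN : (0 : ℝ) < N := by exact_mod_cast hm.trans hmN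
  have hq : 1 < pstar := by
    rw [lt_div_iff₀ hm'] at hpN
    rw [hps, lt_div_iff₀ (by linarith)]
    nlinarith
  have hq0 : 0 < pstar := by linarith
  obtain ⟨K, hK0, hK⟩ := exists_scaled_lipschitz F hF pstar ((2 : ℝ) ^ ((N : ℝ) / pstar)) hq
    (Real.one_lt_rpow (by norm_num) (by positivity)) (fun s j => by
      have h1 : ((2 : ℝ) ^ ((N : ℝ) / pstar)) ^ j = (2 : ℝ) ^ (((j : ℝ) * N) / pstar) := by
        rw [← Real.rpow_intCast, ← Real.rpow_mul (by norm_num)]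
        congr 1; ring
      rw [h1, hhom, ← Real.rpow_mul (by norm_num), div_mul_cancel₀ _ hq0.ne'])
  have hF0 : F 0 = 0 := by
    have h := hhom 0 1
    have h2 : (1 : ℝ) < (2 : ℝ) ^ (((1 : ℤ) : ℝ) * N) :=
      Real.one_lt_rpow (by norm_num) (by push_cast; linarith)
    rw [mul_zero] at h
    have h3 : ((2 : ℝ) ^ (((1 : ℤ) : ℝ) * N) - 1) * F 0 = 0 := by linarith
    exact (mul_eq_zero.1 h3).resolve_left (by linarith)
  intro L
  rcases Nat.eq_zero_or_pos L with rfl | hL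
  · exact ⟨1, one_pos, fun s => by simp [hF0]⟩
  refine ⟨K * (L : ℝ) ^ (pstar - 1) + K + 1, by positivity, fun s => ?_⟩
  have : Nonempty (Fin L) := ⟨⟨0, hL⟩⟩
  obtain ⟨k, hk⟩ := Finite.exists_max (fun l => |s l|)
  have hL1 : (1 : ℝ) ≤ L := by exact_mod_cast hL
  set A := ∑ l ∈ Finset.univ.erase k, |s l| with hA
  have hA0 : 0 ≤ A := Finset.sum_nonneg fun _ _ => abs_nonneg _
  set w := |s k| ^ (pstar - 1) with hw
  have hw0 : 0 ≤ w := Real.rpow_nonneg (abs_nonneg _) _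
  have hsum : ∀ f : Fin L → ℝ, ∑ l, f l = f k + ∑ l ∈ Finset.univ.erase k, f l := fun f =>
    (Finset.add_sum_erase _ f (Finset.mem_univ k)).symm
  have hmain : |F (∑ l, s l) - F (s k)| ≤ K * (L : ℝ) ^ (pstar - 1) * (A * w) := by
    have h1 : |∑ l, s l| ≤ L * |s k| := by
      calc |∑ l, s l| ≤ ∑ l, |s l| := Finset.abs_sum_le_sum_abs _ _
        _ ≤ ∑ _l : Fin L, |s k| := Finset.sum_le_sum fun l _ => hk l
        _ = L * |s k| := by simp
    have h2 : |s k| ≤ L * |s k| := le_mul_of_one_le_left (abs_nonneg _) hL1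
    have h3 : |∑ l, s l - s k| ≤ A := by
      rw [hsum s, add_sub_cancel_left]
      exact Finset.abs_sum_le_sum_abs _ _
    calc _ ≤ K * (L * |s k|) ^ (pstar - 1) * |∑ l, s l - s k| := hK _ _ _ h1 h2
      _ ≤ K * (L * |s k|) ^ (pstar - 1) * A := by gcongr
      _ = _ := by rw [Real.mul_rpow (by positivity) (abs_nonneg _)]; ring
  have hrest : |∑ l ∈ Finset.univ.erase k, F (s l)| ≤ K * (A * w) := by
    calc _ ≤ ∑ l ∈ Finset.univ.erase k, |F (s l)| := Finset.abs_sum_le_sum_abs _ _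
      _ ≤ ∑ l ∈ Finset.univ.erase k, K * w * |s l| := Finset.sum_le_sum fun l _ => by
          simpa [hF0] using hK |s k| (s l) 0 (hk l) (by simp)
      _ = K * (A * w) := by rw [← Finset.mul_sum]; ring
  have hpart : A * w ≤ ∑ l, ∑ k, if l ≠ k then |s l| * |s k| ^ (pstar - 1) else 0 := by
    have hnn : ∀ l i : Fin L, 0 ≤ if l ≠ i then |s l| * |s i| ^ (pstar - 1) else 0 := by
      intro l i
      split_ifs <;> positivity
    calc A * w = ∑ l ∈ Finset.univ.erase k,
            if l ≠ k then |s l| * |s k| ^ (pstar - 1) else 0 := by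
          rw [hA, Finset.sum_mul]
          exact Finset.sum_congr rfl fun l hl => (if_pos (Finset.ne_of_mem_erase hl)).symm
      _ ≤ ∑ l, if l ≠ k then |s l| * |s k| ^ (pstar - 1) else 0 :=
          Finset.sum_le_sum_of_subset_of_nonneg (Finset.subset_univ _) fun l _ _ => hnn l k
      _ ≤ _ := Finset.sum_le_sum fun l _ =>
          Finset.single_le_sum (fun i _ => hnn l i) (Finset.mem_univ k)
  calc |F (∑ l, s l) - ∑ l, F (s l)|
      = |(F (∑ l, s l) - F (s k)) - ∑ l ∈ Finset.univ.erase k, F (s l)| := by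
        rw [hsum fun l => F (s l), sub_sub]
    _ ≤ |F (∑ l, s l) - F (s k)| + |∑ l ∈ Finset.univ.erase k, F (s l)| := abs_sub _ _
    _ ≤ (K * (L : ℝ) ^ (pstar - 1) + K + 1) * (A * w) := by
        nlinarith [mul_nonneg hA0 hw0]
    _ ≤ _ := by gcongr
end

section
/- Let F : ℝ → ℝ be locally Lipschitz continuous and satisfy the homogeneity condition F(2^{jN/p*} s) = 2^{jN} F(s) for all s ∈ ℝ and all j ∈ ℤ. Then for every ε > 0 there exists a constant C_ε > 0 such that for all a, b ∈ ℝ, |F(a + b) − F(a)| ≤ ε |a|^{p*} + C_ε |b|^{p*}. -/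
open Filter

/-!
Put `q = pstar` and `l = 2 ^ (N / q) > 1`; the hypothesis says `F (t * s) = t ^ q * F s` whenever `t`
is an integer power of `l`. Rescaling by the power `t` of `l` just below `max |a| |b|` moves `a`,
`b` and `a + b` into the compact interval `[-2 * l, 2 * l]`, where `F` has a uniform Lipschitz
constant, and scaling back gives `|F (a + b) - F a| ≤ K * (max |a| |b|) ^ (q - 1) * |b|` for all `a`, `b`. The claim follows
by distinguishing `|b| ≤ δ * |a|` from `|a| < |b| / δ`, with `δ` small in terms of `ε` and `K`.
-/

/-- The critical exponent exceeds `1`. -/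
lemma one_lt_critical (m N : ℕ) (hm : 0 < m) (hmN : m < N)
    (p : ℝ) (hp : 1 < p) (hpN : p < (N : ℝ) / m) : 1 < p * N / (N - m * p) := by
  have hm' : (0 : ℝ) < m := by exact_mod_cast hm
  have hN' : (0 : ℝ) < N := by exact_mod_cast hm.trans hmN
  rw [lt_div_iff₀ hm'] at hpN
  rw [one_lt_div (by linarith)]
  nlinarith [mul_pos hm' (zero_lt_one.trans hp)]

/-- The scale-invariant Lipschitz estimate for a function that is homogeneous of degree `q` with
respect to the integer powers of a single `l > 1`. -/
lemma scaled_lipschitz {F : ℝ → ℝ} (hF : LocallyLipschitz F) {l q : ℝ} (hl : 1 < l) (hq : 1 ≤ q)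
    (hhom : ∀ (s : ℝ) (j : ℤ), F (l ^ j * s) = (l ^ j) ^ q * F s) :
    ∃ K > 0, ∀ a b : ℝ, |F (a + b) - F a| ≤ K * (max |a| |b|) ^ (q - 1) * |b| := by
  obtain ⟨L, hL⟩ :=
    (hF.locallyLipschitzOn (s := Set.Icc (-(2 * l)) (2 * l))).exists_lipschitzOnWith_of_compact
      isCompact_Icc
  refine ⟨L + 1, by positivity, fun a b => ?_⟩
  rcases eq_or_ne b 0 with rfl | hb
  · simp
  have hM : 0 < max |a| |b| := lt_max_of_lt_right (abs_pos.2 hb)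
  obtain ⟨j, hj1, hj2⟩ := exists_mem_Ico_zpow hM hl
  have hl0 : 0 < l := by linarith
  set t := l ^ j with ht
  have ht0 : 0 < t := zpow_pos hl0 j
  rw [zpow_add_one₀ hl0.ne', ← ht] at hj2
  have hsmall : ∀ x, |x| ≤ max |a| |b| → |x / t| ≤ l := fun x hx => by
    rw [abs_div, abs_of_pos ht0, div_le_iff₀ ht0]
    linarith
  have ha' := abs_le.1 (hsmall a (le_max_left _ _))
  have hb' := abs_le.1 (hsmall b (le_max_right _ _))
  have key := hL.dist_le_mul (a / t + b / t) ⟨by linarith, by linarith⟩ (a / t)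
    ⟨by linarith, by linarith⟩
  rw [Real.dist_eq, Real.dist_eq, add_sub_cancel_left, abs_div, abs_of_pos ht0] at key
  have e1 : F (a + b) = t ^ q * F (a / t + b / t) := by
    rw [← hhom]; congr 1; rw [← ht]; field_simp
  have e2 : F a = t ^ q * F (a / t) := by
    rw [← hhom]; congr 1; rw [← ht]; field_simp
  have etq : t ^ q = t ^ (q - 1) * t := by
    rw [Real.rpow_sub_one ht0.ne']; field_simp
  calc |F (a + b) - F a| = t ^ q * |F (a / t + b / t) - F (a / t)| := by
        rw [e1, e2, ← mul_sub, abs_mul, abs_of_pos (Real.rpow_pos_of_pos ht0 q)]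
    _ ≤ t ^ q * (L * (|b| / t)) := by gcongr
    _ = L * t ^ (q - 1) * |b| := by rw [etq]; field_simp
    _ ≤ (L + 1) * (max |a| |b|) ^ (q - 1) * |b| := by
        have : t ^ (q - 1) ≤ (max |a| |b|) ^ (q - 1) :=
          Real.rpow_le_rpow ht0.le hj1 (by linarith)
        gcongr
        linarith

/-- Absorption: the scale-invariant Lipschitz bound with a small constant in front of `|a| ^ q`. -/
lemma absorb {K q ε : ℝ} (hK : 0 < K) (hq : 1 ≤ q) (hε : 0 < ε) :
    ∃ C > 0, ∀ a b : ℝ, K * (max |a| |b|) ^ (q - 1) * |b| ≤ ε * |a| ^ q + C * |b| ^ q := by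
  have hpow : ∀ x : ℝ, 0 ≤ x → x ^ (q - 1) * x = x ^ q := fun x hx => by
    rcases hx.eq_or_lt with rfl | hx
    · rw [mul_zero, Real.zero_rpow (by linarith)]
    · rw [Real.rpow_sub_one hx.ne']; field_simp
  set δ := min 1 (ε / K) with hδ
  have hδ0 : 0 < δ := lt_min one_pos (div_pos hε hK)
  have hδ1 : δ ≤ 1 := min_le_left _ _
  have hKδ : K * δ ≤ ε := by
    have := min_le_right 1 (ε / K)
    rw [← hδ, le_div_iff₀ hK] at this
    linarith
  refine ⟨K * (1 / δ) ^ (q - 1), by positivity, fun a b => ?_⟩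
  rcases le_or_gt |b| (δ * |a|) with h | h
  · have hba : |b| ≤ |a| := h.trans (mul_le_of_le_one_left (abs_nonneg a) hδ1)
    rw [max_eq_left hba]
    calc K * |a| ^ (q - 1) * |b| ≤ K * |a| ^ (q - 1) * (δ * |a|) := by gcongr
      _ = K * δ * |a| ^ q := by rw [← hpow |a| (abs_nonneg a)]; ring
      _ ≤ ε * |a| ^ q := by gcongr
      _ ≤ _ := le_add_of_nonneg_right (by positivity)
  · have hmax : max |a| |b| ≤ 1 / δ * |b| := by
      have h1 : 1 ≤ 1 / δ := (one_le_div hδ0).2 hδ1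
      refine max_le ?_ (le_mul_of_one_le_left (abs_nonneg b) h1)
      rw [one_div_mul_eq_div, le_div_iff₀ hδ0]
      linarith
    calc K * (max |a| |b|) ^ (q - 1) * |b| ≤ K * (1 / δ * |b|) ^ (q - 1) * |b| := by
          have := Real.rpow_le_rpow (le_max_of_le_left (abs_nonneg a)) hmax (by linarith : 0 ≤ q - 1)
          gcongr
      _ = K * (1 / δ) ^ (q - 1) * |b| ^ q := by
          rw [Real.mul_rpow (by positivity) (abs_nonneg b), ← hpow |b| (abs_nonneg b)]; ring
      _ ≤ _ := le_add_of_nonneg_left (by positivity)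

theorem stmt_2 (m N : ℕ) (hm : 0 < m) (hmN : m < N)
    (p pstar : ℝ) (hp : 1 < p) (hpN : p < (N : ℝ) / m)
    (hps : pstar = p * N / (N - m * p))
    (F : ℝ → ℝ) (hF : LocallyLipschitz F)
    (hhom : ∀ (s : ℝ) (j : ℤ),
      F ((2 : ℝ) ^ (((j : ℝ) * N) / pstar) * s) = (2 : ℝ) ^ ((j : ℝ) * N) * F s) :
    ∀ ε > 0, ∃ C > 0, ∀ a b : ℝ,
      |F (a + b) - F a| ≤ ε * |a| ^ pstar + C * |b| ^ pstar := by
  intro ε hε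
  have hq : 1 < pstar := hps ▸ one_lt_critical m N hm hmN p hp hpN
  have hq0 : 0 < pstar := zero_lt_one.trans hq
  have hN : (0 : ℝ) < N := by exact_mod_cast hm.trans hmN
  have hl : (1 : ℝ) < 2 ^ ((N : ℝ) / pstar) :=
    Real.one_lt_rpow one_lt_two (div_pos hN hq0)
  have hhom' : ∀ (s : ℝ) (j : ℤ), F (((2 : ℝ) ^ ((N : ℝ) / pstar)) ^ j * s) =
      (((2 : ℝ) ^ ((N : ℝ) / pstar)) ^ j) ^ pstar * F s := fun s j => by
    have e : ((2 : ℝ) ^ ((N : ℝ) / pstar)) ^ j = 2 ^ (((j : ℝ) * N) / pstar) := by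
      rw [← Real.rpow_intCast, ← Real.rpow_mul zero_le_two]
      congr 1; ring
    rw [e, hhom, ← Real.rpow_mul zero_le_two, div_mul_cancel₀ _ hq0.ne']
  obtain ⟨K, hK, hKF⟩ := scaled_lipschitz hF hl hq.le hhom'
  obtain ⟨C, hC, hCab⟩ := absorb hK hq.le hε
  exact ⟨C, hC, fun a b => (hKF a b).trans (hCab a b)⟩
end

section
/- Let F : ℝ → ℝ be locally Lipschitz continuous and satisfy the homogeneity condition F(2^{jN/p*} s) = 2^{jN} F(s) for all s ∈ ℝ and all j ∈ ℤ. Then for every L ∈ ℕ and every ε > 0 there exist constants C_ε > 0 and C_L > 0 such that for all s_1, …, s_L, r ∈ ℝ, |F(∑_{l=1}^L s_l + r) − ∑_{l=1}^L F(s_l)| ≤ ε |∑_{l=1}^L s_l|^{p*} + C_ε |r|^{p*} + C_L ∑_{1 ≤ l ≠ l' ≤ L} |s_l| |s_{l'}|^{p*−1}. -/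
/-!
Write `q = pstar > 1` and `lam = 2 ^ (N / q) > 1`, so that the homogeneity reads
`F (lam ^ j * s) = (lam ^ j) ^ q * F s`. Any two reals, not both zero, can be rescaled by a power
of `lam` so that the larger modulus lies in `[1, lam)`. The Lipschitz bound on the compact interval
`[-lam, lam]` thus scales to the global bound
`|F a - F b| ≤ K * M ^ (q - 1) * |a - b|` whenever `|a|, |b| ≤ M` (`growth`).

With `S = ∑ s l`, the difference `F (S + r) - F S` is then handled by distinguishing `|r| ≤ δ |S|`
from `|r| > δ |S|` for a small `δ` (`perturb`), which replaces Young's inequality. The difference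
`F S - ∑ F (s l)` is handled by singling out the term `s k₀` of largest modulus: `F S` is compared
with `F (s k₀)`, and the remaining `F (s l)` are at most
`K |s l| ^ q ≤ K |s l| |s k₀| ^ (q - 1)` (`splitting`).
-/

open Filter

/-- The Lipschitz bound on a fundamental interval, propagated to all scales by discrete
homogeneity of degree `q` under `lam`. -/
lemma growth {F : ℝ → ℝ} (hF : LocallyLipschitz F) {q lam : ℝ} (hq : 1 < q) (hlam : 1 < lam)
    (hhom : ∀ (s : ℝ) (j : ℤ), F (lam ^ j * s) = (lam ^ j) ^ q * F s) :
    ∃ K > 0, ∀ a b M : ℝ, |a| ≤ M → |b| ≤ M → |F a - F b| ≤ K * M ^ (q - 1) * |a - b| := by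
  have hL : ∃ K : NNReal, LipschitzOnWith K F (Set.Icc (-lam) lam) :=
    (hF.locallyLipschitzOn (s := Set.Icc (-lam) lam)).exists_lipschitzOnWith_of_compact
      isCompact_Icc
  obtain ⟨K, hK⟩ := hL
  refine ⟨K + 1, by positivity, fun a b M' ha' hb' => ?_⟩
  obtain ⟨M, hM, ha, hb, hMM⟩ : ∃ M, M = max |a| |b| ∧ |a| ≤ M ∧ |b| ≤ M ∧ M ≤ M' :=
    ⟨_, rfl, le_max_left _ _, le_max_right _ _, max_le ha' hb'⟩
  have hM0 : 0 ≤ M := (abs_nonneg a).trans ha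
  rcases hM0.eq_or_lt with h0 | hpos
  · have h1 : a = 0 := abs_eq_zero.1 (le_antisymm (h0 ▸ ha) (abs_nonneg a))
    have h2 : b = 0 := abs_eq_zero.1 (le_antisymm (h0 ▸ hb) (abs_nonneg b))
    simp [h1, h2]
  obtain ⟨n, hn1, hn2⟩ := exists_mem_Ico_zpow hpos hlam
  have hl0 : 0 < lam := by linarith
  -- `t` is the rescaling factor: `1 ≤ t * M < lam`.
  obtain ⟨t, ht⟩ : ∃ t, t = lam ^ (-n) := ⟨_, rfl⟩
  have htpos : 0 < t := ht ▸ zpow_pos hl0 _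
  have htn : t * lam ^ n = 1 := by
    rw [ht, ← zpow_add₀ hl0.ne']; simp
  have h1M : 1 ≤ t * M := by rw [← htn]; gcongr
  have hMl : t * M ≤ lam := by
    have : t * lam ^ (n + 1) = lam := by rw [zpow_add_one₀ hl0.ne', ← mul_assoc, htn, one_mul]
    rw [← this]; gcongr
  have hmem : ∀ x, |x| ≤ M → t * x ∈ Set.Icc (-lam) lam := fun x hx => by
    rw [Set.mem_Icc, ← abs_le, abs_mul, abs_of_pos htpos]
    exact (mul_le_mul_of_nonneg_left hx htpos.le).trans hMl
  have h := hK.dist_le_mul _ (hmem a ha) _ (hmem b hb)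
  rw [Real.dist_eq, Real.dist_eq, ht, hhom, hhom, ← ht, ← mul_sub, ← mul_sub, abs_mul, abs_mul,
    abs_of_pos htpos, abs_of_pos (Real.rpow_pos_of_pos htpos q)] at h
  have htq : t ^ q = t ^ (q - 1) * t := by
    rw [← Real.rpow_add_one htpos.ne']; ring_nf
  have hone : 1 ≤ t ^ (q - 1) * M ^ (q - 1) := by
    rw [← Real.mul_rpow htpos.le hM0]
    exact Real.one_le_rpow h1M (by linarith)
  have h2 : t ^ (q - 1) * |F a - F b| ≤ K * |a - b| := by
    rw [htq] at h
    refine le_of_mul_le_mul_left ?_ htpos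
    linarith
  have htq0 : 0 < t ^ (q - 1) := Real.rpow_pos_of_pos htpos _
  have h3 : |F a - F b| ≤ K * M ^ (q - 1) * |a - b| := by
    refine le_of_mul_le_mul_left ?_ htq0
    have : K * |a - b| * 1 ≤ K * |a - b| * (t ^ (q - 1) * M ^ (q - 1)) := by gcongr
    linarith
  refine h3.trans ?_
  have : (K : ℝ) ≤ K + 1 := by linarith
  have hq1 : 0 ≤ q - 1 := by linarith
  gcongr

/-- A perturbation of size `r` costs only an arbitrarily small multiple of `|S| ^ q`: for `r` small
relative to `S` the growth bound gains the ratio as a factor, and otherwise `|r| ^ q` dominates. -/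
lemma perturb {F : ℝ → ℝ} {q K : ℝ} (hq : 1 < q) (hK0 : 0 < K)
    (hK : ∀ a b M : ℝ, |a| ≤ M → |b| ≤ M → |F a - F b| ≤ K * M ^ (q - 1) * |a - b|)
    {ε : ℝ} (hε : 0 < ε) :
    ∃ C > 0, ∀ S r : ℝ, |F (S + r) - F S| ≤ ε * |S| ^ q + C * |r| ^ q := by
  have hq1 : 0 ≤ q - 1 := by linarith
  have hpow : ∀ x : ℝ, 0 ≤ x → x ^ (q - 1) * x = x ^ q := fun x hx => by
    rw [← Real.rpow_add_one' hx (by linarith)]; ring_nf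
  -- `δ ≤ 1` is chosen so small that `K * 2 ^ (q - 1) * δ ≤ ε`.
  obtain ⟨δ, hδ0, hδ1, hδ⟩ : ∃ δ > 0, δ ≤ 1 ∧ K * 2 ^ (q - 1) * δ ≤ ε := by
    have hc : 0 < K * (2 : ℝ) ^ (q - 1) := by positivity
    refine ⟨min 1 (ε / (K * 2 ^ (q - 1))), by positivity, min_le_left _ _, ?_⟩
    calc _ ≤ K * 2 ^ (q - 1) * (ε / (K * 2 ^ (q - 1))) := by
          gcongr; exact min_le_right _ _
      _ = ε := by field_simp
  refine ⟨K * (1 / δ + 1) ^ (q - 1), by positivity, fun S r => ?_⟩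
  have hS := abs_nonneg S
  have hr := abs_nonneg r
  have h := hK (S + r) S (|S| + |r|) (abs_add_le _ _) (by linarith)
  rw [add_sub_cancel_left] at h
  refine h.trans ?_
  rcases le_total |r| (δ * |S|) with hc | hc
  · have h1 : |S| + |r| ≤ 2 * |S| := by nlinarith
    calc _ ≤ K * (2 * |S|) ^ (q - 1) * (δ * |S|) := by gcongr
      _ = (K * 2 ^ (q - 1) * δ) * (|S| ^ (q - 1) * |S|) := by
          rw [Real.mul_rpow (by norm_num) hS]; ring
      _ ≤ ε * |S| ^ q := by rw [hpow _ hS]; gcongr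
      _ ≤ _ := le_add_of_nonneg_right (by positivity)
  · have h1 : |S| + |r| ≤ (1 / δ + 1) * |r| := by
      have : |S| ≤ 1 / δ * |r| := by
        rw [one_div, inv_mul_eq_div, le_div_iff₀ hδ0]; linarith
      linarith
    calc _ ≤ K * ((1 / δ + 1) * |r|) ^ (q - 1) * |r| := by gcongr
      _ = K * (1 / δ + 1) ^ (q - 1) * (|r| ^ (q - 1) * |r|) := by
          rw [Real.mul_rpow (by positivity) hr]; ring
      _ = K * (1 / δ + 1) ^ (q - 1) * |r| ^ q := by rw [hpow _ hr]
      _ ≤ _ := le_add_of_nonneg_left (by positivity)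

/-- Superposition error, bounded by mixed terms only: after subtracting `F` of the largest summand
from both sides, every remaining contribution carries a factor `|s l|` with `l ≠ k₀`. -/
lemma splitting {F : ℝ → ℝ} {q K : ℝ} (hq : 1 < q) (hK0 : 0 < K) (hF0 : F 0 = 0)
    (hK : ∀ a b M : ℝ, |a| ≤ M → |b| ≤ M → |F a - F b| ≤ K * M ^ (q - 1) * |a - b|)
    (L : ℕ) :
    ∃ C > 0, ∀ s : Fin L → ℝ, |F (∑ l, s l) - ∑ l, F (s l)| ≤
      C * ∑ l, ∑ k, if l ≠ k then |s l| * |s k| ^ (q - 1) else 0 := by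
  have hq1 : 0 ≤ q - 1 := by linarith
  refine ⟨K * (L : ℝ) ^ (q - 1) + K, by positivity, fun s => ?_⟩
  rcases Nat.eq_zero_or_pos L with rfl | hLpos
  · simp [hF0]
  have : Nonempty (Fin L) := ⟨⟨0, hLpos⟩⟩
  obtain ⟨k₀, hk₀⟩ := Finite.exists_max (fun l => |s l|)
  have hL1 : (1 : ℝ) ≤ L := by exact_mod_cast hLpos
  have hs0 := abs_nonneg (s k₀)
  have hsum : |∑ l, s l| ≤ L * |s k₀| := by
    refine (Finset.abs_sum_le_sum_abs _ _).trans ?_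
    refine (Finset.sum_le_card_nsmul _ _ |s k₀| (fun l _ => hk₀ l)).trans ?_
    simp
  obtain ⟨T, hT⟩ : ∃ T, T = ∑ l ∈ Finset.univ.erase k₀, |s l| := ⟨_, rfl⟩
  -- The sum over `l ≠ k₀` of the terms `(l, k₀)` is part of the double sum.
  have hD : T * |s k₀| ^ (q - 1) ≤
      ∑ l, ∑ k, if l ≠ k then |s l| * |s k| ^ (q - 1) else 0 := by
    have hnn : ∀ l k, 0 ≤ if l ≠ k then |s l| * |s k| ^ (q - 1) else 0 := fun l k => by
      split_ifs <;> positivity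
    rw [hT, Finset.sum_mul]
    refine le_trans (Finset.sum_le_sum fun l hl => ?_)
      (Finset.sum_le_sum_of_subset_of_nonneg (Finset.erase_subset k₀ _)
        fun l _ _ => Finset.sum_nonneg fun k _ => hnn l k)
    refine le_trans (le_of_eq ?_)
      (Finset.single_le_sum (fun k _ => hnn l k) (Finset.mem_univ k₀))
    rw [if_pos (Finset.ne_of_mem_erase hl)]
  have e1 : ∑ l, s l - s k₀ = ∑ l ∈ Finset.univ.erase k₀, s l := by
    rw [← Finset.add_sum_erase _ _ (Finset.mem_univ k₀)]; ring
  have e2 : ∑ l, F (s l) = F (s k₀) + ∑ l ∈ Finset.univ.erase k₀, F (s l) :=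
    (Finset.add_sum_erase _ _ (Finset.mem_univ k₀)).symm
  have h1 : |F (∑ l, s l) - F (s k₀)| ≤ K * (L : ℝ) ^ (q - 1) * (T * |s k₀| ^ (q - 1)) := by
    refine (hK _ _ (L * |s k₀|) hsum (by nlinarith)).trans ?_
    rw [Real.mul_rpow (by positivity) hs0, e1]
    have : |∑ l ∈ Finset.univ.erase k₀, s l| ≤ T := hT ▸ Finset.abs_sum_le_sum_abs _ _
    calc _ ≤ K * ((L : ℝ) ^ (q - 1) * |s k₀| ^ (q - 1)) * T := by gcongr
      _ = _ := by ring
  have h2 : |∑ l ∈ Finset.univ.erase k₀, F (s l)| ≤ K * (T * |s k₀| ^ (q - 1)) := by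
    refine (Finset.abs_sum_le_sum_abs _ _).trans ?_
    rw [hT, Finset.sum_mul, Finset.mul_sum]
    refine Finset.sum_le_sum fun l _ => ?_
    have := hK (s l) 0 |s k₀| (hk₀ l) (by simp)
    rw [hF0, sub_zero, sub_zero] at this
    linarith
  calc _ = |(F (∑ l, s l) - F (s k₀)) - ∑ l ∈ Finset.univ.erase k₀, F (s l)| := by
        rw [e2]; ring_nf
    _ ≤ _ := abs_sub _ _
    _ ≤ (K * (L : ℝ) ^ (q - 1) + K) * (T * |s k₀| ^ (q - 1)) := by linarith
    _ ≤ _ := by gcongr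

theorem stmt_3 (m N : ℕ) (hm : 0 < m) (hmN : m < N)
    (p pstar : ℝ) (hp : 1 < p) (hpN : p < (N : ℝ) / m)
    (hps : pstar = p * N / (N - m * p))
    (F : ℝ → ℝ) (hF : LocallyLipschitz F)
    (hhom : ∀ (s : ℝ) (j : ℤ),
      F ((2 : ℝ) ^ (((j : ℝ) * N) / pstar) * s) = (2 : ℝ) ^ ((j : ℝ) * N) * F s) :
    ∀ L : ℕ, ∀ ε > 0, ∃ Cε > 0, ∃ CL > 0, ∀ (s : Fin L → ℝ) (r : ℝ),
      |F (∑ l, s l + r) - ∑ l, F (s l)| ≤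
        ε * |∑ l, s l| ^ pstar + Cε * |r| ^ pstar +
          CL * ∑ l, ∑ k, if l ≠ k then |s l| * |s k| ^ (pstar - 1) else 0 := by
  have hm' : (0 : ℝ) < m := by exact_mod_cast hm
  have hN' : (0 : ℝ) < N := by exact_mod_cast hm.trans hmN
  have hden : 0 < (N : ℝ) - m * p := by
    rw [lt_div_iff₀ hm'] at hpN; linarith
  have hq : 1 < pstar := by
    rw [hps, lt_div_iff₀ hden]; nlinarith
  have hlam : 1 < (2 : ℝ) ^ ((N : ℝ) / pstar) :=
    Real.one_lt_rpow (by norm_num) (by positivity)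
  have hz : ∀ j : ℤ, ((2 : ℝ) ^ ((N : ℝ) / pstar)) ^ j = (2 : ℝ) ^ (((j : ℝ) * N) / pstar) := by
    intro j
    rw [← Real.rpow_intCast, ← Real.rpow_mul (by norm_num)]
    ring_nf
  have hF0 : F 0 = 0 := by
    have h := hhom 0 1
    rw [mul_zero] at h
    have h2 : 1 < (2 : ℝ) ^ (((1 : ℤ) : ℝ) * N) :=
      Real.one_lt_rpow (by norm_num) (by push_cast; linarith)
    have h3 : ((2 : ℝ) ^ (((1 : ℤ) : ℝ) * N) - 1) * F 0 = 0 := by linarith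
    exact (mul_eq_zero.1 h3).resolve_left (by linarith)
  obtain ⟨K, hK0, hK⟩ := growth hF hq hlam (fun s j => by
    rw [hz, hhom, ← Real.rpow_mul (by norm_num)]
    congr 2
    field_simp)
  intro L ε hε
  obtain ⟨Cε, hCε, h1⟩ := perturb hq hK0 hK hε
  obtain ⟨CL, hCL, h2⟩ := splitting hq hK0 hF0 hK L
  refine ⟨Cε, hCε, CL, hCL, fun s r => ?_⟩
  exact (abs_sub_le _ (F (∑ l, s l)) _).trans (add_le_add (h1 _ r) (h2 s))
end

section
/- For every L ∈ ℕ there exists a constant C_L > 0 such that for all s_1, …, s_L ∈ ℝ, |F(∑_{l=1}^L s_l) − ∑_{l=1}^L F(s_l)| ≤ C_L ∑_{1 ≤ l ≠ k ≤ L} |s_l| |s_k|^{p*−1}. -/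
/-!
Write `q = p* - 1 ≥ 0` and let `j` be an index at which `|s j| = M` is maximal. On `[-R, R]` the
function `F` is Lipschitz with constant `C₀ R ^ q` (`abs_primitive_sub_le`). Since the total sum and
`s j` both lie in `[-L M, L M]`,
`|F (∑ l, s l) - F (s j)| ≤ C₀ (L M) ^ q ∑_{l ≠ j} |s l|`,
while for `l ≠ j` one has `|F (s l)| ≤ C₀ M ^ q |s l|`. Both bounds only involve the terms
`|s l| |s j| ^ q` with `l ≠ j` of the right-hand side, so `C = C₀ (L ^ q + 1)` works.
-/

lemma abs_primitive_sub_le {f F : ℝ → ℝ} (hf : Continuous f) {C₀ q : ℝ} (hC₀ : 0 < C₀)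
    (hq : 0 ≤ q) (hfb : ∀ s : ℝ, |f s| ≤ C₀ * |s| ^ q)
    (hF : ∀ s : ℝ, F s = ∫ t in (0 : ℝ)..s, f t) {R a b : ℝ} (ha : |a| ≤ R) (hb : |b| ≤ R) :
    |F a - F b| ≤ C₀ * R ^ q * |a - b| := by
  rw [hF, hF, intervalIntegral.integral_interval_sub_left
    (hf.intervalIntegrable _ _) (hf.intervalIntegrable _ _), ← Real.norm_eq_abs]
  refine intervalIntegral.norm_integral_le_of_norm_le_const fun t ht => ?_
  have ht' : t ∈ Set.Icc (-R) R :=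
    Set.uIcc_subset_Icc (abs_le.1 hb) (abs_le.1 ha) (Set.uIoc_subset_uIcc ht)
  refine (hfb t).trans ?_
  gcongr
  exact abs_le.2 ht'

theorem stmt_4 (m N : ℕ) (hm : 0 < m) (hmN : m < N)
    (p pstar : ℝ) (hp : 1 < p) (hpN : p < (N : ℝ) / m)
    (hps : pstar = p * N / (N - m * p))
    (f F : ℝ → ℝ) (hf : Continuous f)
    (C₀ : ℝ) (hC₀ : 0 < C₀) (hfb : ∀ s : ℝ, |f s| ≤ C₀ * |s| ^ (pstar - 1))
    (hFdef : ∀ s : ℝ, F s = ∫ t in (0 : ℝ)..s, f t) :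
    ∀ L : ℕ, ∃ C > 0, ∀ s : Fin L → ℝ,
      |F (∑ l, s l) - ∑ l, F (s l)| ≤
        C * ∑ l, ∑ k, if l ≠ k then |s l| * |s k| ^ (pstar - 1) else 0 := by
  have hq : 0 ≤ pstar - 1 := by
    have hm' : (0 : ℝ) < m := by exact_mod_cast hm
    have hN' : (0 : ℝ) ≤ N := by positivity
    have hd : 0 < (N : ℝ) - m * p := by
      rw [lt_div_iff₀ hm'] at hpN
      linarith
    rw [hps, sub_nonneg, le_div_iff₀ hd]
    nlinarith
  clear hps
  set q := pstar - 1
  have hF0 : F 0 = 0 := by simp [hFdef]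
  intro L
  refine ⟨C₀ * ((L : ℝ) ^ q + 1), by positivity, fun s => ?_⟩
  rcases L.eq_zero_or_pos with rfl | hL
  · simp [hF0]
  haveI : Nonempty (Fin L) := ⟨⟨0, hL⟩⟩
  obtain ⟨j, hj⟩ := Finite.exists_max fun l => |s l|
  have hL1 : (1 : ℝ) ≤ L := by exact_mod_cast hL
  set T : ℝ := ∑ l ∈ Finset.univ.erase j, |s l|
  have hsum : |∑ l, s l| ≤ L * |s j| :=
    (Finset.abs_sum_le_sum_abs _ _).trans
      ((Finset.sum_le_sum fun l _ => hj l).trans (by simp))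
  have hmain : |F (∑ l, s l) - F (s j)| ≤ C₀ * ((L : ℝ) ^ q * |s j| ^ q) * T := by
    have h := abs_primitive_sub_le hf hC₀ hq hfb hFdef hsum
      (le_mul_of_one_le_left (abs_nonneg (s j)) hL1)
    rw [Real.mul_rpow (by positivity) (abs_nonneg _)] at h
    refine h.trans ?_
    gcongr
    rw [← Finset.add_sum_erase _ _ (Finset.mem_univ j), add_sub_cancel_left]
    exact Finset.abs_sum_le_sum_abs _ _
  have hrest : |∑ l ∈ Finset.univ.erase j, F (s l)| ≤ C₀ * |s j| ^ q * T := by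
    refine (Finset.abs_sum_le_sum_abs _ _).trans ?_
    rw [Finset.mul_sum]
    refine Finset.sum_le_sum fun l _ => ?_
    simpa [hF0] using abs_primitive_sub_le hf hC₀ hq hfb hFdef (hj l)
      (by simp : |(0 : ℝ)| ≤ |s j|)
  -- Of the double sum, keep only the terms with `k = j`.
  have hT : T * |s j| ^ q ≤ ∑ l, ∑ k, if l ≠ k then |s l| * |s k| ^ q else 0 := by
    have hnn : ∀ l k, 0 ≤ if l ≠ k then |s l| * |s k| ^ q else 0 := fun l k => by
      split_ifs <;> positivity
    calc T * |s j| ^ q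
        = ∑ l ∈ Finset.univ.erase j, if l ≠ j then |s l| * |s j| ^ q else 0 := by
          rw [Finset.sum_mul]
          exact Finset.sum_congr rfl fun l hl => (if_pos (Finset.ne_of_mem_erase hl)).symm
      _ ≤ ∑ l, if l ≠ j then |s l| * |s j| ^ q else 0 :=
          Finset.sum_le_sum_of_subset_of_nonneg (Finset.erase_subset _ _) fun l _ _ => hnn l j
      _ ≤ _ := Finset.sum_le_sum fun l _ =>
          Finset.single_le_sum (f := fun k => if l ≠ k then |s l| * |s k| ^ q else 0)
            (fun k _ => hnn l k) (Finset.mem_univ j)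
  calc |F (∑ l, s l) - ∑ l, F (s l)|
      = |(F (∑ l, s l) - F (s j)) - ∑ l ∈ Finset.univ.erase j, F (s l)| := by
        rw [← Finset.add_sum_erase _ (fun l => F (s l)) (Finset.mem_univ j), sub_sub]
    _ ≤ C₀ * ((L : ℝ) ^ q * |s j| ^ q) * T + C₀ * |s j| ^ q * T :=
        (abs_sub _ _).trans (add_le_add hmain hrest)
    _ = C₀ * ((L : ℝ) ^ q + 1) * (T * |s j| ^ q) := by ring
    _ ≤ _ := by gcongr
end

section
/- Let p > 1 be a real number and d, L positive integers. Then there exists a constant C_L > 0 such that for all vectors α_1, …, α_L ∈ ℝ^d, | |∑_{l=1}^L α_l|^p − ∑_{l=1}^L |α_l|^p | ≤ C_L ∑_{1 ≤ l ≠ m ≤ L} |α_l| |α_m|^{p−1}. -/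
/-!
Choose an index `m` at which `a = ‖α m‖` is largest, and put `R = ∑_{l ≠ m} ‖α l‖`. Both `‖∑ l, α l‖`
and `a` lie in `[0, L a]` and differ by at most `R`, so the mean value theorem for `t ↦ t ^ p`
(`abs_rpow_sub_rpow_le`) bounds the difference of their `p`-th powers by
`p (L a) ^ (p - 1) R`. The remaining terms satisfy `‖α l‖ ^ p ≤ ‖α l‖ a ^ (p - 1)`, with sum at most
`a ^ (p - 1) R`. Finally `a ^ (p - 1) R` is the part `k = m` of the double sum on the right, so
`C = p L ^ (p - 1) + 1` works.
-/

open Filter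

/-- The mean value inequality for `t ↦ t ^ p` on `[0, B]`. -/
theorem abs_rpow_sub_rpow_le {p : ℝ} (hp : 1 < p) {B x y : ℝ} (hx : x ∈ Set.Icc 0 B)
    (hy : y ∈ Set.Icc 0 B) : |x ^ p - y ^ p| ≤ p * B ^ (p - 1) * |x - y| := by
  have := (convex_Icc (0 : ℝ) B).norm_image_sub_le_of_norm_hasDerivWithin_le
    (f := fun t => t ^ p) (f' := fun t => p * t ^ (p - 1)) (C := p * B ^ (p - 1))
    (fun t _ => (Real.hasDerivAt_rpow_const (Or.inr hp.le)).hasDerivWithinAt)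
    (fun t ht => by
      have h0 := Real.rpow_nonneg ht.1 (p - 1)
      rw [Real.norm_of_nonneg (by positivity)]
      gcongr
      exacts [ht.1, ht.2]) hy hx
  simpa [Real.norm_eq_abs] using this

theorem stmt_7 (p : ℝ) (hp : 1 < p) (d L : ℕ) (hd : 0 < d) (hL : 0 < L) :
    ∃ C > 0, ∀ α : Fin L → EuclideanSpace ℝ (Fin d),
      |‖∑ l, α l‖ ^ p - ∑ l, ‖α l‖ ^ p| ≤
        C * ∑ l, ∑ k, if l ≠ k then ‖α l‖ * ‖α k‖ ^ (p - 1) else 0 := by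
  refine ⟨p * (L : ℝ) ^ (p - 1) + 1, by positivity, fun α => ?_⟩
  have : Nonempty (Fin L) := ⟨⟨0, hL⟩⟩
  obtain ⟨m, hm⟩ := Finite.exists_max (fun l => ‖α l‖)
  set a := ‖α m‖ with ha
  have ha0 : 0 ≤ a := norm_nonneg _
  set R := ∑ l ∈ Finset.univ.erase m, ‖α l‖ with hR
  have hR0 : 0 ≤ R := Finset.sum_nonneg fun _ _ => norm_nonneg _
  have hL1 : (1 : ℝ) ≤ L := by exact_mod_cast hL
  have hS : ‖∑ l, α l‖ ≤ L * a := by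
    refine (norm_sum_le _ _).trans ?_
    simpa using Finset.sum_le_card_nsmul Finset.univ (fun l => ‖α l‖) a (fun l _ => hm l)
  have hdiff : |‖∑ l, α l‖ - a| ≤ R := by
    refine (abs_norm_sub_norm_le _ _).trans ?_
    rw [← Finset.add_sum_erase _ _ (Finset.mem_univ m), add_sub_cancel_left]
    exact norm_sum_le _ _
  have h1 : |‖∑ l, α l‖ ^ p - a ^ p| ≤ p * (L : ℝ) ^ (p - 1) * (a ^ (p - 1) * R) := by
    have h := abs_rpow_sub_rpow_le hp (B := L * a) ⟨norm_nonneg _, hS⟩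
      ⟨ha0, le_mul_of_one_le_left ha0 hL1⟩
    rw [Real.mul_rpow (by positivity) ha0] at h
    calc _ ≤ _ := h
      _ ≤ p * ((L : ℝ) ^ (p - 1) * a ^ (p - 1)) * R := by gcongr
      _ = _ := by ring
  have h2 : ∑ l ∈ Finset.univ.erase m, ‖α l‖ ^ p ≤ a ^ (p - 1) * R := by
    rw [hR, Finset.mul_sum]
    refine Finset.sum_le_sum fun l _ => ?_
    have e : ‖α l‖ ^ p = ‖α l‖ ^ (p - 1) * ‖α l‖ := by
      rw [← Real.rpow_add_one' (norm_nonneg _) (by linarith)]; simp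
    rw [e]
    gcongr
    exact hm l
  have h20 : 0 ≤ ∑ l ∈ Finset.univ.erase m, ‖α l‖ ^ p :=
    Finset.sum_nonneg fun _ _ => by positivity
  have h3 : a ^ (p - 1) * R ≤
      ∑ l, ∑ k, if l ≠ k then ‖α l‖ * ‖α k‖ ^ (p - 1) else 0 := by
    have hnn : ∀ l k, 0 ≤ if l ≠ k then ‖α l‖ * ‖α k‖ ^ (p - 1) else 0 := fun l k => by
      split_ifs <;> positivity
    calc a ^ (p - 1) * R = ∑ l ∈ Finset.univ.erase m,
          (if l ≠ m then ‖α l‖ * ‖α m‖ ^ (p - 1) else 0) := by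
          rw [hR, Finset.mul_sum]
          refine Finset.sum_congr rfl fun l hl => ?_
          rw [if_pos (Finset.ne_of_mem_erase hl), mul_comm]
      _ ≤ ∑ l, (if l ≠ m then ‖α l‖ * ‖α m‖ ^ (p - 1) else 0) :=
          Finset.sum_le_sum_of_subset_of_nonneg (Finset.erase_subset _ _) fun l _ _ => hnn l m
      _ ≤ _ := Finset.sum_le_sum fun l _ =>
          Finset.single_le_sum (f := fun k => if l ≠ k then ‖α l‖ * ‖α k‖ ^ (p - 1) else 0)
            (fun k _ => hnn l k) (Finset.mem_univ m)
  have hsplit : ∑ l, ‖α l‖ ^ p = a ^ p + ∑ l ∈ Finset.univ.erase m, ‖α l‖ ^ p :=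
    (Finset.add_sum_erase _ (fun l => ‖α l‖ ^ p) (Finset.mem_univ m)).symm
  refine le_trans ?_ (mul_le_mul_of_nonneg_left h3 (by positivity))
  rw [hsplit, ← sub_sub]
  refine (abs_sub _ _).trans ?_
  rw [abs_of_nonneg h20, add_mul, one_mul]
  exact add_le_add h1 h2
end

section
/- Let N ≥ 1 and L ≥ 0 be integers and R > 0. For each l ∈ {0, …, L} let (y^l_n)_{n∈ℕ} be a sequence in ℝ^N and (j^l_n)_{n∈ℕ} a sequence in ℤ. Assume that for all l ≠ k in {0, …, L}: (i) |j^l_n − j^k_n| + 2^{j^k_n} |y^l_n − y^k_n| → ∞ as n → ∞; and (ii) exactly one of the following holds: j^l_n − j^k_n → +∞, or j^l_n − j^k_n → −∞, or the sequence (j^l_n − j^k_n) converges. For l ∈ {0, …, L} set J^+_l := { l' ∈ {0, …, L} : j^{l'}_n − j^l_n → +∞ as n → ∞ }, and let χ^l_n denote the indicator function of the open ball B(y^l_n, 2^{−j^l_n} R) in ℝ^N. Then there exists n₀ ∈ ℕ such that for all n ≥ n₀ and all x ∈ ℝ^N, ∑_{l=0}^L χ^l_n(x) ∏_{l' ∈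 J^+_l} (1 − χ^{l'}_n(x)) + ∏_{l=0}^L (1 − χ^l_n(x)) = 1, where an empty product is interpreted as 1. -/
/-!
Write `l ≺ l'` when `j l' - j l → +∞`; this is a strict partial order on the indices. If neither
`l ≺ k` nor `k ≺ l`, with `l ≠ k`, then `j l - j k` converges, so by the orthogonality hypothesis
the centres `y l n`, `y k n` are far apart at the common scale `2 ^ (-j k n)`, and the two balls are
eventually disjoint (`eventually_disjoint_balls`).

Hence for `n` large and any `x`, the indices whose ball contains `x` form a finite chain for `≺`.
If this chain is empty, only the last product survives, and it equals `1`. Otherwise only the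
summand of its largest element survives, and it equals `1` (`sum_prod_eq_one`).
-/

open Filter

open scoped Classical in
/-- The pointwise combinatorial identity: if the support of a `{0, 1}`-valued function `χ` on a
finite type is a chain for a strict order `r`, then either `χ = 0` or the sum below has exactly one
nonzero term, that of the `r`-maximal element of the support. -/
theorem sum_prod_eq_one {ι : Type*} [Fintype ι] (r : ι → ι → Prop)
    (hirr : ∀ a, ¬ r a a) (htrans : ∀ a b c, r a b → r b c → r a c)
    (χ : ι → ℝ) (hχ : ∀ a, χ a = 0 ∨ χ a = 1)
    (hchain : ∀ a b, a ≠ b → χ a = 1 → χ b = 1 → r a b ∨ r b a) :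
    (∑ l, χ l * ∏ l', (if r l l' then 1 - χ l' else 1)) + ∏ l, (1 - χ l) = 1 := by
  by_cases hS : ∀ a, χ a = 0
  · simp [hS]
  push Not at hS
  obtain ⟨a₀, ha₀⟩ := hS
  let : IsTrans ι (fun a b => r b a) := ⟨fun a b c h₁ h₂ => htrans c b a h₂ h₁⟩
  let : Std.Irrefl (fun a b => r b a) := ⟨hirr⟩
  have hwf : WellFounded (fun a b : ι => r b a) := Finite.wellFounded_of_trans_of_irrefl _
  obtain ⟨m, hm, hmax⟩ := hwf.has_min {a | χ a = 1} ⟨a₀, (hχ a₀).resolve_left ha₀⟩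
  have hm1 : χ m = 1 := hm
  rw [Finset.prod_eq_zero (Finset.mem_univ m) (by rw [hm1, sub_self]), add_zero,
    Finset.sum_eq_single m]
  · rw [hm1, one_mul]
    refine Finset.prod_eq_one fun l' _ => ?_
    split_ifs with h
    · rcases hχ l' with h0 | h1
      · rw [h0, sub_zero]
      · exact absurd h (hmax l' h1)
    · rfl
  · intro l _ hl
    rcases hχ l with h0 | h1
    · rw [h0, zero_mul]
    · have hr : r l m := (hchain l m hl h1 hm1).resolve_right (hmax l h1)
      rw [Finset.prod_eq_zero (Finset.mem_univ m) (by rw [if_pos hr, hm1, sub_self]), mul_zero]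
  · exact fun h => absurd (Finset.mem_univ m) h

/-- Orthogonal sequences at comparable scales have eventually disjoint balls: a common point would
bound `2 ^ (b n) * ‖u n - v n‖` by `R * (1 + 2 ^ (-c))`, with `c` the limit of `a n - b n`. -/
theorem eventually_disjoint_balls {E : Type*} [SeminormedAddCommGroup E] (R : ℝ)
    (u v : ℕ → E) (a b : ℕ → ℤ)
    (horth : Tendsto (fun n => |(a n : ℝ) - (b n : ℝ)| + (2 : ℝ) ^ (b n) * ‖u n - v n‖)
      atTop atTop)
    (c : ℤ) (hc : Tendsto (fun n => a n - b n) atTop (nhds c)) :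
    ∀ᶠ n in atTop, ∀ x, x ∈ Metric.ball (u n) ((2 : ℝ) ^ (-(a n)) * R) →
      x ∉ Metric.ball (v n) ((2 : ℝ) ^ (-(b n)) * R) := by
  -- an integer sequence that converges is eventually equal to its limit
  have hc' : ∀ᶠ n in atTop, a n - b n = c := by
    rw [nhds_discrete, tendsto_pure] at hc
    exact hc
  filter_upwards [hc', horth.eventually_ge_atTop (|(c : ℝ)| + R * (1 + (2 : ℝ) ^ (-c)))]
    with n hn hbig x hx hy
  have h1 : ‖u n - v n‖ < (2 : ℝ) ^ (-(a n)) * R + (2 : ℝ) ^ (-(b n)) * R := by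
    rw [← dist_eq_norm]
    rw [Metric.mem_ball] at hx hy
    linarith [dist_triangle_left (u n) (v n) x]
  have hp : (0 : ℝ) < (2 : ℝ) ^ (b n) := by positivity
  have h2 := mul_lt_mul_of_pos_left h1 hp
  have e1 : (2 : ℝ) ^ (b n) * (2 : ℝ) ^ (-(a n)) = (2 : ℝ) ^ (-c) := by
    rw [← zpow_add₀ two_ne_zero]
    congr 1
    omega
  have e2 : (2 : ℝ) ^ (b n) * (2 : ℝ) ^ (-(b n)) = 1 := by
    rw [← zpow_add₀ two_ne_zero, add_neg_cancel, zpow_zero]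
  have e3 : (a n : ℝ) - (b n : ℝ) = (c : ℝ) := by exact_mod_cast hn
  rw [e3] at hbig
  rw [mul_add, ← mul_assoc, ← mul_assoc, e1, e2] at h2
  linarith

open scoped Classical in
theorem stmt_8 (N L : ℕ) (hN : 1 ≤ N) (R : ℝ) (hR : 0 < R)
    (y : Fin (L + 1) → ℕ → EuclideanSpace ℝ (Fin N))
    (j : Fin (L + 1) → ℕ → ℤ)
    (horth : ∀ l k : Fin (L + 1), l ≠ k →
      Tendsto (fun n => |(j l n : ℝ) - (j k n : ℝ)| + (2 : ℝ) ^ (j k n) * ‖y l n - y k n‖)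
        atTop atTop)
    (htri : ∀ l k : Fin (L + 1), l ≠ k →
      (Tendsto (fun n => j l n - j k n) atTop atTop ∧
        ¬ Tendsto (fun n => j l n - j k n) atTop atBot ∧
        ¬ ∃ c : ℤ, Tendsto (fun n => j l n - j k n) atTop (nhds c)) ∨
      (¬ Tendsto (fun n => j l n - j k n) atTop atTop ∧
        Tendsto (fun n => j l n - j k n) atTop atBot ∧
        ¬ ∃ c : ℤ, Tendsto (fun n => j l n - j k n) atTop (nhds c)) ∨
      (¬ Tendsto (fun n => j l n - j k n) atTop atTop ∧
        ¬ Tendsto (fun n => j l n - j k n) atTop atBot ∧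
        ∃ c : ℤ, Tendsto (fun n => j l n - j k n) atTop (nhds c))) :
    ∃ n₀ : ℕ, ∀ n ≥ n₀, ∀ x : EuclideanSpace ℝ (Fin N),
      (∑ l, (Metric.ball (y l n) ((2 : ℝ) ^ (-(j l n)) * R)).indicator (fun _ => (1 : ℝ)) x *
          ∏ l', (if Tendsto (fun n' => j l' n' - j l n') atTop atTop
            then 1 - (Metric.ball (y l' n) ((2 : ℝ) ^ (-(j l' n)) * R)).indicator
              (fun _ => (1 : ℝ)) x
            else 1)) +
        ∏ l, (1 - (Metric.ball (y l n) ((2 : ℝ) ^ (-(j l n)) * R)).indicator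
          (fun _ => (1 : ℝ)) x) = 1 := by
  have key : ∀ l k : Fin (L + 1), ∀ᶠ n in atTop, l ≠ k →
      (Tendsto (fun n' => j k n' - j l n') atTop atTop ∨
        Tendsto (fun n' => j l n' - j k n') atTop atTop) ∨
      ∀ x, x ∈ Metric.ball (y l n) ((2 : ℝ) ^ (-(j l n)) * R) →
        x ∉ Metric.ball (y k n) ((2 : ℝ) ^ (-(j k n)) * R) := by
    intro l k
    by_cases hlk : l = k
    · exact Eventually.of_forall fun n h => absurd hlk h
    rcases htri l k hlk with ⟨h, -, -⟩ | ⟨-, h, -⟩ | ⟨-, -, c, hc⟩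
    · exact Eventually.of_forall fun n _ => Or.inl (Or.inr h)
    · refine Eventually.of_forall fun n _ => Or.inl (Or.inl ?_)
      simpa only [Function.comp_def, neg_sub] using tendsto_neg_atBot_atTop.comp h
    · filter_upwards [eventually_disjoint_balls R _ _ _ _ (horth l k hlk) c hc] with n hn _
      exact Or.inr hn
  obtain ⟨n₀, hn₀⟩ := eventually_atTop.1
    (eventually_all.2 fun l => eventually_all.2 fun k => key l k)
  refine ⟨n₀, fun n hn x => ?_⟩
  have hmem : ∀ l, (Metric.ball (y l n) ((2 : ℝ) ^ (-(j l n)) * R)).indicator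
      (fun _ => (1 : ℝ)) x = 1 → x ∈ Metric.ball (y l n) ((2 : ℝ) ^ (-(j l n)) * R) := by
    intro l h
    exact Set.mem_of_indicator_ne_zero (by rw [h]; exact one_ne_zero)
  refine sum_prod_eq_one
    (fun l l' => Tendsto (fun n' => j l' n' - j l n') atTop atTop) ?_ ?_
    (fun l => (Metric.ball (y l n) ((2 : ℝ) ^ (-(j l n)) * R)).indicator (fun _ => (1 : ℝ)) x)
    ?_ ?_
  · intro l h
    simp only [sub_self] at h
    exact not_tendsto_const_atTop _ _ h
  · intro l k m h₁ h₂
    simpa only [sub_add_sub_cancel] using h₂.atTop_add_atTop h₁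
  · exact fun l => Set.indicator_eq_zero_or_self _ _ _
  · intro l k hlk hl hk
    exact (hn₀ n hn l k hlk).resolve_right fun h => h x (hmem l hl) (hmem k hk)
end
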